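/- Let α be an algebraic integer in ℚ(√2) such that N(α) = 2^k for some nonnegative integer k, α² is an integer multiple of a unit of ℤ[√2] (α is an algebraic d-number), α ≥ 2 and σ(α) ≥ 2, and N(α−1) divides T(α−1)² in ℤ (α−1 is an algebraic d-number). Then α is a rational integer, α ∈ ℤ. -/

import Mathlib

theorem stmt13_descent (k : ℕ) : ∀ a b : ℤ, a ^ 2 - 2 * b ^ 2 = 2 ^ k →
    ∃ (j : ℕ) (y : ℤ), b = 2 ^ j * y ∧ (2 : ℤ) ^ k ≤ 2 * (2 ^ j) ^ 2 := by
  induction k using Nat.strong_induction_on with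
  | _ k ih =>
    intro a b h
    match k, ih, h with
    | 0, _, _ => exact ⟨0, b, by simp, by norm_num⟩
    | 1, _, _ => exact ⟨0, b, by simp, by norm_num⟩
    | k + 2, ih, h =>
      have ha : (2 : ℤ) ∣ a := by
        apply Int.prime_two.dvd_of_dvd_pow (n := 2)
        exact ⟨b ^ 2 + 2 ^ (k + 1), by linarith [pow_succ (2 : ℤ) (k + 1)]⟩
      obtain ⟨c, rfl⟩ := ha
      have hb : (2 : ℤ) ∣ b := by
        apply Int.prime_two.dvd_of_dvd_pow (n := 2)
        exact ⟨c ^ 2 - 2 ^ k, by rw [pow_add] at h; linarith⟩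
      obtain ⟨d, rfl⟩ := hb
      obtain ⟨j, y, hy, hj⟩ := ih k (by omega) c d (by rw [pow_add] at h; linarith)
      refine ⟨j + 1, y, by rw [hy]; ring, ?_⟩
      rw [pow_add, pow_succ (2 : ℤ) j]
      linarith

/-- Let `α = α.re + α.im·√2` be an algebraic integer in `ℚ(√2)` (an element of `ℤ[√2]`)
whose norm is a power of `2`, such that `α²` is an integer multiple of a unit of `ℤ[√2]`
(i.e. `α` is an algebraic d-number), both `α` and its conjugate `σ(α)` are at least `2`
under the real embedding, and `N(α−1)` divides `T(α−1)²` in `ℤ` (i.e. `α − 1` is an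
algebraic d-number).  Then `α` is a rational integer. -/
theorem stmt13 (α : ℤ√2)
    (hnorm : ∃ k : ℕ, α.norm = 2 ^ k)
    (hdnum : ∃ (m : ℤ) (u : (ℤ√2)ˣ), α ^ 2 = (m : ℤ√2) * (u : ℤ√2))
    (h1 : (2 : ℝ) ≤ (α.re : ℝ) + (α.im : ℝ) * Real.sqrt 2)
    (h2 : (2 : ℝ) ≤ (α.re : ℝ) - (α.im : ℝ) * Real.sqrt 2)
    (hdvd : (α - 1).norm ∣ (2 * (α - 1).re) ^ 2) :
    α.im = 0 := by
  obtain ⟨a, b⟩ := α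
  obtain ⟨k, hk⟩ := hnorm
  simp only [Zsqrtd.norm_def, Zsqrtd.re_sub, Zsqrtd.im_sub, Zsqrtd.re_one, Zsqrtd.im_one] at *
  have hs : Real.sqrt 2 ^ 2 = 2 := Real.sq_sqrt (by norm_num)
  have hk' : a ^ 2 - 2 * b ^ 2 = 2 ^ k := by rw [← hk]; ring
  have ha : 2 ≤ a := by
    have : (2 : ℝ) ≤ a := by linarith
    exact_mod_cast this
  have hN : 4 * a - 4 ≤ a ^ 2 - 2 * b ^ 2 := by
    have : (4 : ℝ) * a - 4 ≤ a ^ 2 - 2 * b ^ 2 := by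
      nlinarith [mul_nonneg (sub_nonneg.2 h1) (sub_nonneg.2 h2)]
    exact_mod_cast this
  obtain ⟨j, y, hy, hj⟩ := stmt13_descent k a b hk'
  by_contra hb
  have hy0 : y ≠ 0 := by rintro rfl; simp at hy; exact hb hy
  have hk0 : k ≠ 0 := by rintro rfl; rw [hk'] at hN; norm_num at hN; omega
  obtain ⟨l, rfl⟩ := Nat.exists_eq_succ_of_ne_zero hk0
  obtain ⟨D, hD⟩ : ∃ D : ℤ, D = a ^ 2 - 2 * b ^ 2 + 1 - 2 * a := ⟨_, rfl⟩
  have hDc : IsCoprime D 2 := by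
    refine ⟨1, a - 2 ^ l, ?_⟩
    rw [hD, hk', Nat.succ_eq_add_one, pow_succ]; ring
  have hd1 : D ∣ 2 ^ 2 * (a - 1) ^ 2 := by
    convert hdvd using 1
    · rw [hD]; ring
    · ring
  have hd2 : D ∣ (a - 1) ^ 2 := (hDc.pow_right).dvd_of_dvd_mul_left hd1
  have hd3 : D ∣ 2 * b ^ 2 := by
    have e : 2 * b ^ 2 = (a - 1) ^ 2 - D := by rw [hD]; ring
    rw [e]
    exact dvd_sub hd2 (dvd_refl D)
  have hd4 : D ∣ b ^ 2 := hDc.dvd_of_dvd_mul_left hd3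
  have hd5 : D ∣ y ^ 2 := by
    rw [hy, mul_pow, ← pow_mul] at hd4
    exact (hDc.pow_right).dvd_of_dvd_mul_left hd4
  have hle : D ≤ y ^ 2 := Int.le_of_dvd (by positivity) hd5
  have e1 : D * (2 ^ j) ^ 2 ≤ b ^ 2 := by
    rw [hy, mul_pow, mul_comm]
    exact mul_le_mul_of_nonneg_left hle (by positivity)
  rw [← hk'] at hj
  obtain ⟨N, hNe⟩ : ∃ N : ℤ, N = a ^ 2 - 2 * b ^ 2 := ⟨_, rfl⟩
  rw [← hNe] at hj hN hD
  have hD0 : 0 ≤ D := by omega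
  have e2 : D * N ≤ 2 * b ^ 2 := by
    have := mul_le_mul_of_nonneg_left hj hD0
    linarith
  have e3 : D * N ≤ a ^ 2 - N := by linarith
  rw [hD] at e3
  obtain ⟨t, ht⟩ : ∃ t, N = 4 * a - 4 + t := ⟨N - (4 * a - 4), by ring⟩
  obtain ⟨c, hc⟩ : ∃ c, a = c + 2 := ⟨a - 2, by ring⟩
  have ht0 : 0 ≤ t := by omega
  have hc0 : 0 ≤ c := by omega
  subst ht hc
  nlinarith [mul_nonneg ht0 hc0, mul_nonneg ht0 ht0, mul_nonneg hc0 hc0]
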